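/- Let H be a finite simple graph on m vertices and let Φ(G,x) = det(xI − A(G)) denote the characteristic polynomial of the adjacency matrix of a graph G. Then for every nonzero real (or complex) number λ, Φ(H∘K_1, λ) = λ^m · Φ(H, λ − 1/λ). -/

import Mathlib

open SimpleGraph

/-- Adjacency matrix of a simple graph over ℝ. -/
noncomputable def adjMat {V : Type*} (G : SimpleGraph V) : Matrix V V ℝ :=
  Matrix.of fun i j => @ite ℝ (G.Adj i j) (Classical.propDecidable _) 1 0

/-- Spectral radius: the largest eigenvalue (supremum of the real spectrum)
of the adjacency matrix. -/
noncomputable def specRad {V : Type*} [Fintype V] [DecidableEq V]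
    (G : SimpleGraph V) : ℝ :=
  sSup (spectrum ℝ (adjMat G))

/-- `D` is a dominating set of `G`. -/
def IsDomSet {V : Type*} (G : SimpleGraph V) (D : Finset V) : Prop :=
  ∀ v ∉ D, ∃ u ∈ D, G.Adj u v

/-- The domination number of `G`. -/
noncomputable def domNum {V : Type*} [Fintype V] (G : SimpleGraph V) : ℕ :=
  sInf {k | ∃ D : Finset V, IsDomSet G D ∧ D.card = k}

/-- The corona `H ∘ K₁`: each vertex `v` of `H` (copied as `Sum.inl v`) gets a new
pendant neighbour `Sum.inr v`. -/
def corona {V : Type*} (H : SimpleGraph V) : SimpleGraph (V ⊕ V) :=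
  SimpleGraph.fromRel (fun x y =>
    (∃ u v, x = Sum.inl u ∧ y = Sum.inl v ∧ H.Adj u v) ∨
    (∃ v, x = Sum.inl v ∧ y = Sum.inr v))

/-!
Listing the copy of `H` before the pendent vertices makes `A(H ∘ K₁)` the block matrix
`[A(H), 1; 1, 0]`. The bottom right block of `λI - A(H ∘ K₁)` is then `λI`, of determinant `λ ^ m`,
and its Schur complement is `λI - A(H) - λ⁻¹I`.
-/

open Matrix

theorem adjMat_eq_adjMatrix {V : Type*} (G : SimpleGraph V) [DecidableRel G.Adj] :
    adjMat G = G.adjMatrix ℝ := by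
  ext u v
  simp only [adjMat, Matrix.of_apply, adjMatrix_apply]
  congr

section Corona

variable {V : Type*} {H : SimpleGraph V}

@[simp]
theorem corona_adj_inl_inl {u v : V} :
    (corona H).Adj (Sum.inl u) (Sum.inl v) ↔ H.Adj u v := by
  simpa [corona, H.adj_comm v u] using H.ne_of_adj

@[simp]
theorem corona_adj_inl_inr {u v : V} : (corona H).Adj (Sum.inl u) (Sum.inr v) ↔ u = v := by
  simp [corona, eq_comm]

@[simp]
theorem corona_adj_inr_inl {u v : V} : (corona H).Adj (Sum.inr u) (Sum.inl v) ↔ u = v := by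
  rw [adj_comm, corona_adj_inl_inr, eq_comm]

@[simp]
theorem not_corona_adj_inr_inr {u v : V} : ¬(corona H).Adj (Sum.inr u) (Sum.inr v) := by
  simp [corona]

theorem adjMatrix_corona {R : Type*} [Zero R] [One R] [DecidableEq V] [DecidableRel H.Adj]
    [DecidableRel (corona H).Adj] :
    (corona H).adjMatrix R = fromBlocks (H.adjMatrix R) 1 1 0 := by
  ext (u | u) (v | v) <;> simp [adjMatrix_apply, Matrix.one_apply]

end Corona

theorem det_smul_one_sub_fromBlocks_zero₂₂ {m n R : Type*} [Fintype m] [DecidableEq m]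
    [Fintype n] [DecidableEq n] [CommRing R] (A : Matrix m m R) (B : Matrix m n R)
    (C : Matrix n m R) (r : R) [Invertible r] :
    (r • (1 : Matrix (m ⊕ n) (m ⊕ n) R) - fromBlocks A B C 0).det =
      r ^ Fintype.card n * (r • (1 : Matrix m m R) - A - ⅟r • (B * C)).det := by
  let : Invertible (r • (1 : Matrix n n R)) := ⟨⅟r • 1, by simp, by simp⟩
  have hblocks : r • (1 : Matrix (m ⊕ n) (m ⊕ n) R) - fromBlocks A B C 0 =
      fromBlocks (r • 1 - A) (-B) (-C) (r • 1) := by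
    rw [← fromBlocks_one, fromBlocks_smul, sub_eq_add_neg, fromBlocks_neg, fromBlocks_add]
    simp [sub_eq_add_neg]
  have hinv : ⅟(r • (1 : Matrix n n R)) = ⅟r • 1 := rfl
  rw [hblocks, det_fromBlocks₂₂, hinv, det_smul, det_one, mul_one]
  simp

theorem charpoly_corona_general {V R : Type*} [Fintype V] [DecidableEq V] [CommRing R]
    (H : SimpleGraph V) [DecidableRel H.Adj] [DecidableRel (corona H).Adj]
    (lam : R) [Invertible lam] :
    (lam • (1 : Matrix (V ⊕ V) (V ⊕ V) R) - (corona H).adjMatrix R).det =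
      lam ^ Fintype.card V * ((lam - ⅟lam) • (1 : Matrix V V R) - H.adjMatrix R).det := by
  rw [adjMatrix_corona, det_smul_one_sub_fromBlocks_zero₂₂, Matrix.mul_one, sub_smul,
    sub_right_comm]

theorem charpoly_corona {V : Type*} [Fintype V] [DecidableEq V]
    (H : SimpleGraph V) (lam : ℝ) (hlam : lam ≠ 0) :
    Matrix.det (lam • (1 : Matrix (V ⊕ V) (V ⊕ V) ℝ) - adjMat (corona H)) =
      lam ^ (Fintype.card V) *
        Matrix.det ((lam - 1 / lam) • (1 : Matrix V V ℝ) - adjMat H) := by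
  classical
  let := invertibleOfNonzero hlam
  simpa [adjMat_eq_adjMatrix] using charpoly_corona_general H lam
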